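/- arXiv:2603.19463 — 2 statements merged into one kernel-verified Lean document; each statement's English description precedes it below -/
import Mathlib

section
/- Universal approximation on compacts (Theorem UAT_K): for every v ∈ C²(H), all compact sets K, K' ⊆ H and every ε > 0, there exist d ∈ ℕ and f ∈ 𝒩_d such that the cylindrical function w_f satisfies sup_{x∈K} |v(x) − w_f(x)| < ε, sup_{x∈K} ‖Dv(x) − Dw_f(x)‖ < ε, and sup_{x∈K, h∈K'} ‖(D²v(x) − D²w_f(x)) h‖ < ε. In other words, the class of Hilbert–Galerkin Neural Operators is dense in C²(H) for the compact-open topology in which the Hessian space also carries the compact-open topology. -/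
open Filter Topology
open scoped RealInnerProductSpace

/-- The coordinate map `x ↦ (⟪e 0, x⟫, …, ⟪e (d-1), x⟫)` of a Hilbert space with respect to the
first `d` elements of a sequence `e`. -/
noncomputable def euclCoord {H : Type*} [NormedAddCommGroup H] [InnerProductSpace ℝ H]
    (e : ℕ → H) (d : ℕ) (x : H) : EuclideanSpace ℝ (Fin d) :=
  WithLp.toLp 2 fun i => ⟪e i, x⟫

/-- The cylindrical function (Hilbert–Galerkin Neural Operator) with inner network `f`. -/
noncomputable def cyl {H : Type*} [NormedAddCommGroup H] [InnerProductSpace ℝ H]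
    (e : ℕ → H) {d : ℕ} (f : EuclideanSpace ℝ (Fin d) → ℝ) (x : H) : ℝ :=
  f (euclCoord e d x)

/-!
Let `T d : H → ℝᵈ` be the map of the first `d` coordinates and `P d` the orthogonal projection onto
`(ker (T d))ᗮ`. The projections have norm at most `1` and converge strongly to the identity, so they
converge uniformly on compact sets, and by the chain rule `v ∘ P d` is `C²`-close to `v` on `K`
and `K'` for some `d`. This is where testing the Hessian against a compact set of directions is
essential: in infinite dimensions `P d` does not converge to the identity in operator norm.

Since `P d` vanishes on `ker (T d)`, it factors as `S ∘ T d`, and `v ∘ P d = (v ∘ S) ∘ T d` is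
cylindrical. Approximating `v ∘ S` by some `f ∈ N d` on the compact set `T d '' K` and pulling back
along `T d` gives the result; the accuracy of `f` is chosen after `d`, so it may depend on `‖T d‖`.
-/

section Convergence

theorem tendstoUniformlyOn_of_forall_tendsto_prod {ι X β : Type*} [TopologicalSpace X]
    [UniformSpace β] {l : Filter ι} {F : ι → X → β} {f : X → β} {K : Set X} (hK : IsCompact K)
    (hf : Continuous f)
    (h : ∀ x ∈ K, Tendsto (fun p : ι × X => F p.1 p.2) (l ×ˢ 𝓝 x) (𝓝 (f x))) :
    TendstoUniformlyOn F f l K := by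
  rw [← tendstoLocallyUniformlyOn_iff_tendstoUniformlyOn_of_compact hK,
    tendstoLocallyUniformlyOn_iff_forall_tendsto]
  intro x hx
  have hpair : Tendsto (fun p : ι × X => (f p.2, F p.1 p.2)) (l ×ˢ 𝓝 x) (𝓝 (f x, f x)) :=
    ((hf.tendsto x).comp tendsto_snd).prodMk_nhds (h x hx)
  exact (hpair.mono_right (nhds_le_uniformity (f x))).mono_left
    (prod_mono_right l nhdsWithin_le_nhds)

theorem tendsto_clm_apply_of_norm_le {𝕜 E F α : Type*} [NontriviallyNormedField 𝕜]
    [SeminormedAddCommGroup E] [NormedSpace 𝕜 E] [SeminormedAddCommGroup F] [NormedSpace 𝕜 F]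
    {l : Filter α} {A : α → E →L[𝕜] F} {u : α → E} {x : E} {y : F} {C : ℝ}
    (hC : ∀ a, ‖A a‖ ≤ C) (hA : Tendsto (fun a => A a x) l (𝓝 y)) (hu : Tendsto u l (𝓝 x)) :
    Tendsto (fun a => A a (u a)) l (𝓝 y) := by
  have hdist : Tendsto (fun a => C * ‖u a - x‖) l (𝓝 0) := by
    simpa only [sub_self, norm_zero, mul_zero] using (hu.sub_const x).norm.const_mul C
  have hdiff : Tendsto (fun a => A a (u a - x)) l (𝓝 0) :=
    squeeze_zero_norm (fun a => (A a).le_of_opNorm_le (hC a) (u a - x)) hdist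
  simpa only [map_sub, sub_add_cancel, zero_add] using hdiff.add hA

end Convergence

section Kernel

theorem exists_linearMap_comp_eq_of_ker_le_ker {𝕜 V W Z : Type*} [Field 𝕜] [AddCommGroup V]
    [Module 𝕜 V] [AddCommGroup W] [Module 𝕜 W] [AddCommGroup Z] [Module 𝕜 Z]
    {f : V →ₗ[𝕜] W} {g : V →ₗ[𝕜] Z} (h : f.ker ≤ g.ker) : ∃ s : W →ₗ[𝕜] Z, s ∘ₗ f = g := by
  obtain ⟨r, hr⟩ := f.rangeRestrict.exists_rightInverse_of_surjective f.range_rangeRestrict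
  obtain ⟨s, hs⟩ := (g ∘ₗ r).exists_extend
  refine ⟨s, LinearMap.ext fun x => ?_⟩
  have hker : r (f.rangeRestrict x) - x ∈ f.ker := by
    rw [LinearMap.mem_ker, map_sub, sub_eq_zero]
    exact congrArg Subtype.val (LinearMap.congr_fun hr (f.rangeRestrict x))
  calc s (f x) = g (r (f.rangeRestrict x)) := LinearMap.congr_fun hs (f.rangeRestrict x)
    _ = g x := by rw [← sub_eq_zero, ← map_sub]; exact h hker

theorem exists_clm_comp_eq_of_ker_le_ker {𝕜 V W Z : Type*} [NontriviallyNormedField 𝕜]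
    [CompleteSpace 𝕜] [AddCommGroup V] [Module 𝕜 V] [TopologicalSpace V]
    [AddCommGroup W] [Module 𝕜 W] [TopologicalSpace W] [IsTopologicalAddGroup W]
    [ContinuousSMul 𝕜 W] [T2Space W] [FiniteDimensional 𝕜 W]
    [AddCommGroup Z] [Module 𝕜 Z] [TopologicalSpace Z] [IsTopologicalAddGroup Z]
    [ContinuousSMul 𝕜 Z] {f : V →L[𝕜] W} {g : V →L[𝕜] Z} (h : f.ker ≤ g.ker) :
    ∃ s : W →L[𝕜] Z, s ∘L f = g := by
  obtain ⟨s, hs⟩ := exists_linearMap_comp_eq_of_ker_le_ker h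
  exact ⟨s.toContinuousLinearMap, ContinuousLinearMap.ext fun x => LinearMap.congr_fun hs x⟩

theorem tendsto_starProjection_orthogonal_of_iInf_eq_bot {𝕜 E ι : Type*} [RCLike 𝕜]
    [NormedAddCommGroup E] [InnerProductSpace 𝕜 E] [CompleteSpace E] [Preorder ι]
    {U : ι → Submodule 𝕜 E} [∀ i, (U i).HasOrthogonalProjection] (hU : Antitone U)
    (hbot : ⨅ i, U i = ⊥) (x : E) :
    Tendsto (fun i => (U i)ᗮ.starProjection x) atTop (𝓝 x) := by
  refine Submodule.starProjection_tendsto_self (fun i => (U i)ᗮ)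
    (fun _ _ hij => Submodule.orthogonal_le (hU hij)) x (top_le_iff.mpr ?_)
  rw [Submodule.topologicalClosure_eq_top_iff, ← Submodule.iInf_orthogonal]
  simpa only [Submodule.orthogonal_orthogonal] using hbot

end Kernel

section ChainRule

theorem gradient_comp_clm {𝕜 E F : Type*} [RCLike 𝕜] [NormedAddCommGroup E]
    [InnerProductSpace 𝕜 E] [CompleteSpace E] [NormedAddCommGroup F] [InnerProductSpace 𝕜 F]
    [CompleteSpace F] {f : F → 𝕜} (A : E →L[𝕜] F) {x : E} (hf : DifferentiableAt 𝕜 f (A x)) :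
    gradient (f ∘ A) x = A.adjoint (gradient f (A x)) := by
  refine ext_inner_right 𝕜 fun y => ?_
  rw [ContinuousLinearMap.adjoint_inner_left, inner_gradient_left, inner_gradient_left,
    (hf.hasFDerivAt.comp x A.hasFDerivAt).fderiv, ContinuousLinearMap.comp_apply]

variable {E F : Type*} [NormedAddCommGroup E] [InnerProductSpace ℝ E] [CompleteSpace E]
  [NormedAddCommGroup F] [InnerProductSpace ℝ F] [CompleteSpace F]

theorem contDiff_gradient {f : E → ℝ} {m n : WithTop ℕ∞} (hf : ContDiff ℝ n f) (hmn : m + 1 ≤ n) :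
    ContDiff ℝ m (gradient f) :=
  (InnerProductSpace.toDual ℝ E).symm.contDiff.comp (hf.fderiv_right hmn)

theorem fderiv_gradient_comp_clm {f : F → ℝ} (A : E →L[ℝ] F) {x : E} (hf : Differentiable ℝ f)
    (hf' : DifferentiableAt ℝ (gradient f) (A x)) :
    fderiv ℝ (gradient (f ∘ A)) x = A.adjoint ∘L fderiv ℝ (gradient f) (A x) ∘L A := by
  have hgrad : gradient (f ∘ A) = A.adjoint ∘ gradient f ∘ A :=
    funext fun y => gradient_comp_clm A (hf (A y))
  rw [hgrad]
  exact (A.adjoint.hasFDerivAt.comp x (hf'.hasFDerivAt.comp x A.hasFDerivAt)).fderiv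

end ChainRule

section C2CloseOn

variable {E F : Type*} [NormedAddCommGroup E] [InnerProductSpace ℝ E] [CompleteSpace E]
  [NormedAddCommGroup F] [InnerProductSpace ℝ F] [CompleteSpace F]

/-- `w` lies in the `ε`-neighbourhood of `v` given by `K` and `K'` in the topology on `C²(E)` for
which values and gradients converge uniformly on compact sets and Hessians converge uniformly on
compact sets of points and directions. -/
def C2CloseOn (K K' : Set E) (ε : ℝ) (v w : E → ℝ) : Prop :=
  (∀ x ∈ K, |v x - w x| < ε) ∧
  (∀ x ∈ K, ‖gradient v x - gradient w x‖ < ε) ∧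
  (∀ x ∈ K, ∀ h ∈ K', ‖fderiv ℝ (gradient v) x h - fderiv ℝ (gradient w) x h‖ < ε)

theorem C2CloseOn.trans {K K' : Set E} {ε₁ ε₂ : ℝ} {u v w : E → ℝ}
    (huv : C2CloseOn K K' ε₁ u v) (hvw : C2CloseOn K K' ε₂ v w) :
    C2CloseOn K K' (ε₁ + ε₂) u w := by
  obtain ⟨huv₀, huv₁, huv₂⟩ := huv
  obtain ⟨hvw₀, hvw₁, hvw₂⟩ := hvw
  refine ⟨fun x hx => ?_, fun x hx => ?_, fun x hx h hh => ?_⟩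
  · exact (abs_sub_le _ _ _).trans_lt (add_lt_add (huv₀ x hx) (hvw₀ x hx))
  · exact (norm_sub_le_norm_sub_add_norm_sub _ _ _).trans_lt (add_lt_add (huv₁ x hx) (hvw₁ x hx))
  · exact (norm_sub_le_norm_sub_add_norm_sub _ _ _).trans_lt
      (add_lt_add (huv₂ x hx h hh) (hvw₂ x hx h hh))

theorem exists_pos_c2CloseOn_of_opNorm_lt (K : Set E) {K' : Set E} (hK' : Bornology.IsBounded K')
    {ε : ℝ} (hε : 0 < ε) :
    ∃ δ > 0, ∀ v w : E → ℝ, (∀ x ∈ K, |v x - w x| < δ) →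
      (∀ x ∈ K, ‖gradient v x - gradient w x‖ < δ) →
      (∀ x ∈ K, ‖fderiv ℝ (gradient v) x - fderiv ℝ (gradient w) x‖ < δ) →
      C2CloseOn K K' ε v w := by
  obtain ⟨R, hR⟩ := hK'.exists_norm_le
  have hC : 0 < max 1 R := lt_max_of_lt_left one_pos
  have hδ : ε / max 1 R ≤ ε := div_le_self hε.le (le_max_left 1 R)
  refine ⟨ε / max 1 R, div_pos hε hC, fun v w h₀ h₁ h₂ =>
    ⟨fun x hx => (h₀ x hx).trans_le hδ, fun x hx => (h₁ x hx).trans_le hδ, fun x hx h hh => ?_⟩⟩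
  calc ‖fderiv ℝ (gradient v) x h - fderiv ℝ (gradient w) x h‖
      ≤ ‖fderiv ℝ (gradient v) x - fderiv ℝ (gradient w) x‖ * max 1 R :=
        (fderiv ℝ (gradient v) x - fderiv ℝ (gradient w) x).le_opNorm_of_le
          ((hR h hh).trans (le_max_right 1 R))
    _ < ε := (lt_div_iff₀ hC).mp (h₂ x hx)

theorem exists_pos_c2CloseOn_comp_clm (T : E →L[ℝ] F) (K K' : Set E) {ε : ℝ} (hε : 0 < ε) :
    ∃ δ > 0, ∀ v w : F → ℝ, ContDiff ℝ 2 v → ContDiff ℝ 2 w →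
      C2CloseOn (T '' K) (T '' K') δ v w → C2CloseOn K K' ε (v ∘ T) (w ∘ T) := by
  have hC : 0 < max 1 ‖T.adjoint‖ := lt_max_of_lt_left one_pos
  have adjoint_lt {y : F} (hy : ‖y‖ < ε / max 1 ‖T.adjoint‖) : ‖T.adjoint y‖ < ε :=
    calc ‖T.adjoint y‖ ≤ max 1 ‖T.adjoint‖ * ‖y‖ := T.adjoint.le_of_opNorm_le (le_max_right _ _) y
      _ < ε := (lt_div_iff₀' hC).mp hy
  refine ⟨ε / max 1 ‖T.adjoint‖, div_pos hε hC, fun v w hv hw ⟨h₀, h₁, h₂⟩ =>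
    ⟨fun x hx => ?_, fun x hx => ?_, fun x hx h hh => ?_⟩⟩
  · exact (h₀ (T x) (Set.mem_image_of_mem T hx)).trans_le
      (div_le_self hε.le (le_max_left 1 ‖T.adjoint‖))
  · rw [gradient_comp_clm T (hv.differentiable two_ne_zero _),
      gradient_comp_clm T (hw.differentiable two_ne_zero _), ← map_sub]
    exact adjoint_lt (h₁ (T x) (Set.mem_image_of_mem T hx))
  · have hess {f : F → ℝ} (hf : ContDiff ℝ 2 f) := fderiv_gradient_comp_clm T (x := x)
      (hf.differentiable two_ne_zero)
      ((contDiff_gradient hf one_add_one_eq_two.le).differentiable one_ne_zero _)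
    simp only [hess hv, hess hw, ContinuousLinearMap.comp_apply, ← map_sub]
    exact adjoint_lt (h₂ (T x) (Set.mem_image_of_mem T hx) (T h) (Set.mem_image_of_mem T hh))

theorem eventually_c2CloseOn_comp_clm {ι : Type*} {l : Filter ι} {P : ι → E →L[ℝ] E} {C : ℝ}
    (hC : ∀ i, ‖P i‖ ≤ C) (hP : ∀ x, Tendsto (fun i => P i x) l (𝓝 x))
    (hP' : ∀ x, Tendsto (fun i => (P i).adjoint x) l (𝓝 x)) {v : E → ℝ} (hv : ContDiff ℝ 2 v)
    {K K' : Set E} (hK : IsCompact K) (hK' : IsCompact K') {ε : ℝ} (hε : 0 < ε) :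
    ∀ᶠ i in l, C2CloseOn K K' ε v (v ∘ P i) := by
  have hC' (i : ι) : ‖(P i).adjoint‖ ≤ C := by rw [LinearIsometryEquiv.norm_map]; exact hC i
  have hgrad : ContDiff ℝ 1 (gradient v) := contDiff_gradient hv one_add_one_eq_two.le
  have hhess : Continuous fun p : E × E => fderiv ℝ (gradient v) p.1 p.2 :=
    hgrad.continuous_fderiv_apply one_ne_zero
  have tendsto_P {X : Type _} {u : ι × X → E} {m : Filter X} {y : E}
      (hu : Tendsto u (l ×ˢ m) (𝓝 y)) : Tendsto (fun p => P p.1 (u p)) (l ×ˢ m) (𝓝 y) :=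
    tendsto_clm_apply_of_norm_le (fun p => hC p.1) ((hP y).comp tendsto_fst) hu
  have tendsto_adjoint_P {X : Type _} {u : ι × X → E} {m : Filter X} {y : E}
      (hu : Tendsto u (l ×ˢ m) (𝓝 y)) : Tendsto (fun p => (P p.1).adjoint (u p)) (l ×ˢ m) (𝓝 y) :=
    tendsto_clm_apply_of_norm_le (fun p => hC' p.1) ((hP' y).comp tendsto_fst) hu
  have unif₀ : TendstoUniformlyOn (fun i x => v (P i x)) v l K :=
    tendstoUniformlyOn_of_forall_tendsto_prod hK hv.continuous fun x _ =>
      (hv.continuous.tendsto x).comp (tendsto_P tendsto_snd)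
  have unif₁ : TendstoUniformlyOn (fun i x => (P i).adjoint (gradient v (P i x)))
      (gradient v) l K :=
    tendstoUniformlyOn_of_forall_tendsto_prod hK hgrad.continuous fun x _ =>
      tendsto_adjoint_P ((hgrad.continuous.tendsto x).comp (tendsto_P tendsto_snd))
  have unif₂ : TendstoUniformlyOn
      (fun i (p : E × E) => (P i).adjoint (fderiv ℝ (gradient v) (P i p.1) (P i p.2)))
      (fun p => fderiv ℝ (gradient v) p.1 p.2) l (K ×ˢ K') :=
    tendstoUniformlyOn_of_forall_tendsto_prod (hK.prod hK') hhess fun p _ =>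
      tendsto_adjoint_P ((hhess.tendsto p).comp
        ((tendsto_P ((continuous_fst.tendsto p).comp tendsto_snd)).prodMk_nhds
          (tendsto_P ((continuous_snd.tendsto p).comp tendsto_snd))))
  filter_upwards [Metric.tendstoUniformlyOn_iff.mp unif₀ ε hε,
    Metric.tendstoUniformlyOn_iff.mp unif₁ ε hε, Metric.tendstoUniformlyOn_iff.mp unif₂ ε hε]
    with i h₀ h₁ h₂
  refine ⟨h₀, fun x hx => ?_, fun x hx h hh => ?_⟩
  · rw [gradient_comp_clm (P i) (hv.differentiable two_ne_zero _), ← dist_eq_norm]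
    exact h₁ x hx
  · rw [fderiv_gradient_comp_clm (P i) (hv.differentiable two_ne_zero)
      (hgrad.differentiable one_ne_zero _), ← dist_eq_norm]
    exact h₂ (x, h) ⟨hx, hh⟩

end C2CloseOn

section Coordinates

variable {H : Type*} [NormedAddCommGroup H] [InnerProductSpace ℝ H]

/-- The coordinate map `euclCoord e d` as a continuous linear map. -/
noncomputable def euclCoordCLM (e : ℕ → H) (d : ℕ) : H →L[ℝ] EuclideanSpace ℝ (Fin d) :=
  (EuclideanSpace.equiv (Fin d) ℝ).symm.toContinuousLinearMap ∘L
    ContinuousLinearMap.pi fun i : Fin d => innerSL ℝ (e i)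

theorem mem_ker_euclCoordCLM {e : ℕ → H} {d : ℕ} {x : H} :
    x ∈ (euclCoordCLM e d).ker ↔ ∀ i < d, ⟪e i, x⟫ = 0 := by
  have hcoord : euclCoordCLM e d x = WithLp.toLp 2 fun i : Fin d => ⟪e i, x⟫ := rfl
  simp only [LinearMap.mem_ker, ContinuousLinearMap.coe_coe, hcoord, WithLp.toLp_eq_zero,
    funext_iff, Pi.zero_apply, Fin.forall_iff]

theorem antitone_ker_euclCoordCLM (e : ℕ → H) : Antitone fun d => (euclCoordCLM e d).ker :=
  fun _ _ hab _ hx => mem_ker_euclCoordCLM.mpr fun i hi =>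
    mem_ker_euclCoordCLM.mp hx i (hi.trans_le hab)

theorem iInf_ker_euclCoordCLM {e : ℕ → H}
    (htot : Dense ((Submodule.span ℝ (Set.range e) : Submodule ℝ H) : Set H)) :
    ⨅ d, (euclCoordCLM e d).ker = ⊥ := by
  refine (Submodule.eq_bot_iff _).mpr fun x hx => htot.eq_zero_of_inner_right ℝ fun y hy => ?_
  have hrange : Submodule.span ℝ (Set.range e) ≤ (ℝ ∙ x)ᗮ := by
    rw [Submodule.span_le]
    rintro _ ⟨i, rfl⟩
    rw [SetLike.mem_coe, Submodule.mem_orthogonal_singleton_iff_inner_left]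
    exact mem_ker_euclCoordCLM.mp ((Submodule.mem_iInf _).mp hx (i + 1)) i i.lt_succ_self
  exact Submodule.mem_orthogonal_singleton_iff_inner_left.mp (hrange hy)

variable [CompleteSpace H]

/-- The Galerkin projection of level `d`, orthogonal with the same kernel as the coordinate map.
For orthonormal `e` it is `x ↦ ∑ i < d, ⟪e i, x⟫ • e i`. -/
noncomputable def galerkinProj (e : ℕ → H) (d : ℕ) : H →L[ℝ] H :=
  (euclCoordCLM e d).kerᗮ.starProjection

theorem adjoint_galerkinProj (e : ℕ → H) (d : ℕ) :
    (galerkinProj e d).adjoint = galerkinProj e d :=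
  (isSelfAdjoint_starProjection _).adjoint_eq

theorem tendsto_galerkinProj {e : ℕ → H}
    (htot : Dense ((Submodule.span ℝ (Set.range e) : Submodule ℝ H) : Set H)) (x : H) :
    Tendsto (fun d => galerkinProj e d x) atTop (𝓝 x) :=
  tendsto_starProjection_orthogonal_of_iInf_eq_bot (antitone_ker_euclCoordCLM e)
    (iInf_ker_euclCoordCLM htot) x

theorem exists_comp_euclCoordCLM_eq_galerkinProj (e : ℕ → H) (d : ℕ) :
    ∃ S : EuclideanSpace ℝ (Fin d) →L[ℝ] H, S ∘L euclCoordCLM e d = galerkinProj e d := by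
  refine exists_clm_comp_eq_of_ker_le_ker ?_
  rw [galerkinProj, Submodule.ker_starProjection]
  exact Submodule.le_orthogonal_orthogonal _

theorem exists_c2CloseOn_comp_euclCoordCLM {e : ℕ → H}
    (htot : Dense ((Submodule.span ℝ (Set.range e) : Submodule ℝ H) : Set H)) {v : H → ℝ}
    (hv : ContDiff ℝ 2 v) {K K' : Set H} (hK : IsCompact K) (hK' : IsCompact K') {ε : ℝ}
    (hε : 0 < ε) :
    ∃ (d : ℕ) (g : EuclideanSpace ℝ (Fin d) → ℝ), ContDiff ℝ 2 g ∧
      C2CloseOn K K' ε v (g ∘ euclCoordCLM e d) := by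
  have hadj (x : H) : Tendsto (fun d => (galerkinProj e d).adjoint x) atTop (𝓝 x) := by
    simpa only [adjoint_galerkinProj] using tendsto_galerkinProj htot x
  obtain ⟨d, hd⟩ := (eventually_c2CloseOn_comp_clm
    (fun d => Submodule.starProjection_norm_le (euclCoordCLM e d).kerᗮ)
    (tendsto_galerkinProj htot) hadj hv hK hK' hε).exists
  obtain ⟨S, hS⟩ := exists_comp_euclCoordCLM_eq_galerkinProj e d
  refine ⟨d, v ∘ S, hv.comp S.contDiff, ?_⟩
  rwa [Function.comp_assoc, ← ContinuousLinearMap.coe_comp, hS]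

end Coordinates

theorem hgno_universal_approximation_on_compacts_general
    {H : Type*} [NormedAddCommGroup H] [InnerProductSpace ℝ H] [CompleteSpace H]
    (e : ℕ → H)
    (htot : Dense ((Submodule.span ℝ (Set.range e) : Submodule ℝ H) : Set H))
    (N : ∀ d : ℕ, Set (EuclideanSpace ℝ (Fin d) → ℝ))
    (hNsmooth : ∀ d : ℕ, ∀ f ∈ N d, ContDiff ℝ 2 f)
    (hNdense : ∀ (d : ℕ) (h : EuclideanSpace ℝ (Fin d) → ℝ), ContDiff ℝ 2 h →
      ∀ K : Set (EuclideanSpace ℝ (Fin d)), IsCompact K → ∀ ε > 0,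
      ∃ f ∈ N d,
        (∀ y ∈ K, |h y - f y| < ε) ∧
        (∀ y ∈ K, ‖gradient h y - gradient f y‖ < ε) ∧
        (∀ y ∈ K, ‖fderiv ℝ (gradient h) y - fderiv ℝ (gradient f) y‖ < ε))
    (v : H → ℝ) (hv : ContDiff ℝ 2 v)
    (K K' : Set H) (hK : IsCompact K) (hK' : IsCompact K')
    (ε : ℝ) (hε : 0 < ε) :
    ∃ (d : ℕ) (f : EuclideanSpace ℝ (Fin d) → ℝ), f ∈ N d ∧
      (∀ x ∈ K, |v x - cyl e f x| < ε) ∧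
      (∀ x ∈ K, ‖gradient v x - gradient (cyl e f) x‖ < ε) ∧
      (∀ x ∈ K, ∀ h ∈ K',
        ‖fderiv ℝ (gradient v) x h - fderiv ℝ (gradient (cyl e f)) x h‖ < ε) := by
  obtain ⟨d, g, hg, hvg⟩ := exists_c2CloseOn_comp_euclCoordCLM htot hv hK hK' (half_pos hε)
  set T := euclCoordCLM e d
  obtain ⟨δ, hδ, pullback⟩ := exists_pos_c2CloseOn_comp_clm T K K' (half_pos hε)
  obtain ⟨η, hη, closeOn_of_opNorm⟩ :=
    exists_pos_c2CloseOn_of_opNorm_lt (T '' K) (hK'.image T.continuous).isBounded hδ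
  obtain ⟨f, hfN, hf₀, hf₁, hf₂⟩ := hNdense d g hg (T '' K) (hK.image T.continuous) η hη
  have hgf : C2CloseOn K K' (ε / 2) (g ∘ T) (cyl e f) :=
    pullback g f hg (hNsmooth d f hfN) (closeOn_of_opNorm g f hf₀ hf₁ hf₂)
  have hvf : C2CloseOn K K' ε v (cyl e f) := add_halves ε ▸ hvg.trans hgf
  exact ⟨d, f, hfN, hvf⟩

/-- universal approximation on compacts (Theorem UAT_K): Hilbert–Galerkin Neural
Operators built from classes `𝒩 d` of finite-dimensional C² functions that are `C²`-dense on
compacts are dense in `C²(H)` for the compact-open topology in which the Hessian space also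
carries the compact-open topology. -/
theorem hgno_universal_approximation_on_compacts
    {H : Type*} [NormedAddCommGroup H] [InnerProductSpace ℝ H] [CompleteSpace H]
    (e : ℕ → H) (he : Orthonormal ℝ e)
    (htot : Dense ((Submodule.span ℝ (Set.range e) : Submodule ℝ H) : Set H))
    (N : ∀ d : ℕ, Set (EuclideanSpace ℝ (Fin d) → ℝ))
    (hNsmooth : ∀ d : ℕ, ∀ f ∈ N d, ContDiff ℝ 2 f)
    (hNdense : ∀ (d : ℕ) (h : EuclideanSpace ℝ (Fin d) → ℝ), ContDiff ℝ 2 h →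
      ∀ K : Set (EuclideanSpace ℝ (Fin d)), IsCompact K → ∀ ε > 0,
      ∃ f ∈ N d,
        (∀ y ∈ K, |h y - f y| < ε) ∧
        (∀ y ∈ K, ‖gradient h y - gradient f y‖ < ε) ∧
        (∀ y ∈ K, ‖fderiv ℝ (gradient h) y - fderiv ℝ (gradient f) y‖ < ε))
    (v : H → ℝ) (hv : ContDiff ℝ 2 v)
    (K K' : Set H) (hK : IsCompact K) (hK' : IsCompact K')
    (ε : ℝ) (hε : 0 < ε) :
    ∃ (d : ℕ) (f : EuclideanSpace ℝ (Fin d) → ℝ), f ∈ N d ∧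
      (∀ x ∈ K, |v x - cyl e f x| < ε) ∧
      (∀ x ∈ K, ‖gradient v x - gradient (cyl e f) x‖ < ε) ∧
      (∀ x ∈ K, ∀ h ∈ K',
        ‖fderiv ℝ (gradient v) x h - fderiv ℝ (gradient (cyl e f)) x h‖ < ε) :=
  hgno_universal_approximation_on_compacts_general e htot N hNsmooth hNdense v hv K K' hK hK' ε hε
end

section
/- Verification of the L² consistency condition via the adjoint: let p > 2 and q ≥ 1, let v ∈ C²(H) be such that Dv(x) ∈ D(L) for every x ∈ H and ‖Dv(x)‖^{2p/(p−2)} ≤ C(1+‖x‖^q) for some C > 0 and all x ∈ H. Let μ be a Borel probability measure on H such that μ(H \ D(L*)) = 0, ∫_{D(L*)} ‖L* x‖^p μ(dx) < ∞ and ∫_H ‖x‖^q μ(dx) < ∞. Then ∫_H |⟨L(Dv(x) − P_d Dv(P_d x)), x⟩|² μ(dx) → 0 as d → ∞. -/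
open Filter Topology MeasureTheory
open scoped RealInnerProductSpace ENNReal

/-!
On the full-measure set `D(L*)` the adjoint turns the integrand into `|⟪w_d x, L* x⟫|²`, where
`w_d = Dv - P_d ∘ Dv ∘ P_d` no longer meets the unbounded operator. Since the `P_d` are contractions
converging strongly to the identity, `w_d → 0` pointwise, and `w_d` inherits twice any radial bound
on `Dv`. Hölder's inequality for `(p - 2) / 2p + 1 / p = 1 / 2` makes the product of that bound with
`‖L* x‖` square integrable, and dominated convergence applies. Measurability of `L*` comes from
`P_d (L* x) = ∑ ⟪L b, x⟫ b` over an orthonormal basis of the range of `P_d`, which is continuous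
in `x`.
-/

theorem top_le_topologicalClosure_iSup_span_image_range {R M : Type*} [Semiring R]
    [AddCommMonoid M] [Module R M] [TopologicalSpace M] [ContinuousAdd M] [ContinuousConstSMul R M]
    {e : ℕ → M} (he : Dense (Submodule.span R (Set.range e) : Set M)) :
    ⊤ ≤ (⨆ d, Submodule.span R (e '' Finset.range d)).topologicalClosure := by
  rw [← Submodule.dense_iff_topologicalClosure_eq_top.1 he]
  refine Submodule.topologicalClosure_mono (Submodule.span_le.2 ?_)
  rintro _ ⟨i, rfl⟩
  exact Submodule.mem_iSup_of_mem (i + 1) (Submodule.subset_span ⟨i, by simp, rfl⟩)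

theorem secondCountableTopology_of_dense_iSup {𝕜 E ι : Type*} [RCLike 𝕜]
    [NormedAddCommGroup E] [NormedSpace 𝕜 E] [Countable ι] {U : ι → Submodule 𝕜 E}
    [∀ i, FiniteDimensional 𝕜 (U i)]
    (hU_dense : ⊤ ≤ (⨆ i, U i).topologicalClosure) : SecondCountableTopology E := by
  have hU_sep : TopologicalSpace.IsSeparable (⋃ i, (U i : Set E)) :=
    .iUnion fun i =>
      have := FiniteDimensional.proper_rclike 𝕜 (U i)
      have : TopologicalSpace.SeparableSpace (U i) := inferInstance
      .of_subtype (U i : Set E)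
  have h_univ : TopologicalSpace.IsSeparable (Set.univ : Set E) := by
    refine (hU_sep.span (R := 𝕜)).closure.mono fun x _ => ?_
    simpa [Submodule.iSup_eq_span] using! hU_dense (Submodule.mem_top (x := x))
  have := TopologicalSpace.isSeparable_univ_iff.1 h_univ
  exact UniformSpace.secondCountable_of_separable E

section Projections

variable {𝕜 E : Type*} [RCLike 𝕜] [NormedAddCommGroup E] [InnerProductSpace 𝕜 E]

theorem starProjection_span_image_eq_sum {ι : Type*} {v : ι → E} (hv : Orthonormal 𝕜 v)
    (s : Finset ι) [(Submodule.span 𝕜 (v '' s)).HasOrthogonalProjection] (x : E) :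
    (Submodule.span 𝕜 (v '' s)).starProjection x = ∑ i ∈ s, inner 𝕜 (v i) x • v i := by
  refine Submodule.eq_starProjection_of_mem_orthogonal ?_ ?_
  · exact Submodule.sum_mem _ fun i hi =>
      Submodule.smul_mem _ _ (Submodule.subset_span (Set.mem_image_of_mem v hi))
  · refine Submodule.mem_orthogonal _ _ |>.2 fun u hu => ?_
    induction hu using Submodule.span_induction with
    | mem u hu =>
      obtain ⟨i, hi, rfl⟩ := hu
      rw [inner_sub_right, hv.inner_right_sum _ hi, sub_self]
    | zero => exact inner_zero_left _
    | add u u' _ _ hu hu' => rw [inner_add_left, hu, hu', add_zero]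
    | smul c u _ hu => rw [inner_smul_left, hu, mul_zero]

theorem norm_sub_starProjection_comp_le (K : Submodule 𝕜 E) [K.HasOrthogonalProjection]
    {F : E → E} {x : E} {B : ℝ} (hF : ∀ y, ‖y‖ ≤ ‖x‖ → ‖F y‖ ≤ B) :
    ‖F x - K.starProjection (F (K.starProjection x))‖ ≤ 2 * B :=
  calc ‖F x - K.starProjection (F (K.starProjection x))‖
      ≤ ‖F x‖ + ‖F (K.starProjection x)‖ :=
        (norm_sub_le _ _).trans (by gcongr; exact K.norm_starProjection_apply_le _)
    _ ≤ B + B := add_le_add (hF x le_rfl) (hF _ (K.norm_starProjection_apply_le x))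
    _ = 2 * B := (two_mul B).symm

variable {ι : Type*} [Preorder ι] {U : ι → Submodule 𝕜 E}

theorem tendsto_sub_starProjection_comp [∀ i, (U i).HasOrthogonalProjection] (hU : Monotone U)
    (hU_dense : ⊤ ≤ (⨆ i, U i).topologicalClosure) {F : E → E} {x : E} (hF : ContinuousAt F x) :
    Tendsto (fun i => F x - (U i).starProjection (F ((U i).starProjection x))) atTop (𝓝 0) := by
  have hP (y : E) : Tendsto (fun i => (U i).starProjection y) atTop (𝓝 y) :=
    Submodule.starProjection_tendsto_self U hU y hU_dense
  have hF_diff : Tendsto (fun i => F ((U i).starProjection x) - F x) atTop (𝓝 0) :=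
    tendsto_sub_nhds_zero_iff.2 (hF.tendsto.comp (hP x))
  have hP_diff : Tendsto (fun i => (U i).starProjection (F ((U i).starProjection x) - F x))
      atTop (𝓝 0) :=
    squeeze_zero_norm (fun i => (U i).norm_starProjection_apply_le _)
      (tendsto_zero_iff_norm_tendsto_zero.1 hF_diff)
  simpa [sub_sub] using ((hP (F x)).const_sub (F x)).sub hP_diff

end Projections

theorem continuous_gradient_of_contDiff {𝕜 E : Type*} [RCLike 𝕜] [NormedAddCommGroup E]
    [InnerProductSpace 𝕜 E] [CompleteSpace E] {v : E → 𝕜} {n : WithTop ℕ∞} (hv : ContDiff 𝕜 n v)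
    (hn : n ≠ 0) : Continuous (gradient v) :=
  (InnerProductSpace.toDual 𝕜 E).symm.continuous.comp (hv.continuous_fderiv hn)

section Lp

variable {α E : Type*} [MeasurableSpace α] {μ : Measure α} [NormedAddCommGroup E]

theorem integrable_of_lintegral_ofReal_lt_top {f : α → ℝ} (hf : AEStronglyMeasurable f μ)
    (hf_nonneg : 0 ≤ f) (h : ∫⁻ x, ENNReal.ofReal (f x) ∂μ < ⊤) : Integrable f μ :=
  ⟨hf, (hasFiniteIntegral_iff_ofReal (.of_forall hf_nonneg)).2 h⟩

theorem memLp_ofReal_of_lintegral_rpow_lt_top {f : α → E} {p : ℝ} (hp : 0 < p)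
    (hf : AEStronglyMeasurable f μ) (h : ∫⁻ x, ENNReal.ofReal (‖f x‖ ^ p) ∂μ < ⊤) :
    MemLp f (ENNReal.ofReal p) μ := by
  rw [← integrable_norm_rpow_iff hf (by simpa) ENNReal.ofReal_ne_top, ENNReal.toReal_ofReal hp.le]
  exact integrable_of_lintegral_ofReal_lt_top
    (hf.norm.aemeasurable.pow_const p).aestronglyMeasurable (fun _ => by positivity) h

theorem memLp_ofReal_norm_rpow_inv {f : α → E} {r : ℝ} (hr : 0 < r) (hf : Integrable f μ) :
    MemLp (fun x => ‖f x‖ ^ r⁻¹) (ENNReal.ofReal r) μ := by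
  simpa [ENNReal.ofReal_inv_of_pos hr, hr.le] using
    (memLp_one_iff_integrable.2 hf).norm_rpow_div (ENNReal.ofReal r⁻¹)

theorem tendsto_lintegral_ofReal_norm_rpow_zero {f : ℕ → α → E} {b : α → ℝ} {s : ℝ} (hs : 0 < s)
    (hf : ∀ n, AEStronglyMeasurable (f n) μ) (hb : MemLp b (ENNReal.ofReal s) μ)
    (hfb : ∀ n, ∀ᵐ x ∂μ, ‖f n x‖ ≤ b x) (hlim : ∀ᵐ x ∂μ, Tendsto (f · x) atTop (𝓝 0)) :
    Tendsto (fun n => ∫⁻ x, ENNReal.ofReal (‖f n x‖ ^ s) ∂μ) atTop (𝓝 0) := by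
  have hb_int : Integrable (fun x => ‖b x‖ ^ s) μ := by
    simpa [hs.le] using hb.integrable_norm_rpow (by simpa) ENNReal.ofReal_ne_top
  have h_le (n : ℕ) : ∀ᵐ x ∂μ, ‖‖f n x‖ ^ s‖ ≤ ‖b x‖ ^ s := by
    filter_upwards [hfb n] with x hx
    rw [Real.norm_of_nonneg (by positivity)]
    gcongr
    exact hx.trans (Real.le_norm_self _)
  have h_tendsto : ∀ᵐ x ∂μ, Tendsto (fun n => ‖f n x‖ ^ s) atTop (𝓝 0) := by
    filter_upwards [hlim] with x hx
    simpa [hs.ne'] using hx.norm.rpow_const (.inr hs.le)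
  have h_meas (n : ℕ) : AEStronglyMeasurable (fun x => ‖f n x‖ ^ s) μ :=
    ((hf n).norm.aemeasurable.pow_const s).aestronglyMeasurable
  simpa [Real.abs_rpow_of_nonneg] using tendsto_lintegral_norm_of_dominated_convergence
    h_meas hb_int.hasFiniteIntegral h_le h_tendsto

theorem tendsto_lintegral_abs_inner_rpow_zero [InnerProductSpace ℝ E] {w : ℕ → α → E} {T : α → E}
    {b : α → ℝ} {r p s : ℝ} (hrps : r.HolderTriple p s)
    (hw : ∀ n, AEStronglyMeasurable (w n) μ) (hb : MemLp b (ENNReal.ofReal r) μ)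
    (hwb : ∀ n, ∀ᵐ x ∂μ, ‖w n x‖ ≤ b x) (hlim : ∀ᵐ x ∂μ, Tendsto (w · x) atTop (𝓝 0))
    (hT : MemLp T (ENNReal.ofReal p) μ) :
    Tendsto (fun n => ∫⁻ x, ENNReal.ofReal (|⟪w n x, T x⟫| ^ s) ∂μ) atTop (𝓝 0) := by
  have := hrps.ennrealOfReal
  refine tendsto_lintegral_ofReal_norm_rpow_zero (f := fun n x => ⟪w n x, T x⟫)
    (b := fun x => b x * ‖T x‖) hrps.pos' (fun n => (hw n).inner hT.1) (hT.norm.mul' hb)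
    (fun n => ?_) ?_
  · filter_upwards [hwb n] with x hx
    exact (norm_inner_le_norm (𝕜 := ℝ) (w n x) (T x)).trans (by gcongr)
  · filter_upwards [hlim] with x hx
    simpa using hx.inner (tendsto_const_nhds (x := T x))

end Lp

theorem holderTriple_two_mul_div_sub_two {p : ℝ} (hp : 2 < p) :
    (2 * p / (p - 2)).HolderTriple p 2 where
  inv_add_inv_eq_inv := by field_simp; ring
  left_pos := by have := sub_pos.2 hp; positivity
  right_pos := by positivity

section Galerkin

variable {H : Type*} [NormedAddCommGroup H] [InnerProductSpace ℝ H] [MeasurableSpace H]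
  [OpensMeasurableSpace H] {μ : Measure H} {U : ℕ → Submodule ℝ H}
  [∀ d, FiniteDimensional ℝ (U d)] {L : H →ₗ[ℝ] H} {Ldom : Submodule ℝ H} {Lstar : H → H}

theorem aestronglyMeasurable_of_ae_inner_eq_inner (hU : Monotone U)
    (hU_dense : ⊤ ≤ (⨆ d, U d).topologicalClosure)
    (hadj : ∀ᵐ x ∂μ, ∀ d, ∀ y ∈ U d, ⟪L y, x⟫ = ⟪y, Lstar x⟫) :
    AEStronglyMeasurable Lstar μ := by
  let b (d : ℕ) := stdOrthonormalBasis ℝ (U d)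
  refine aestronglyMeasurable_of_tendsto_ae atTop
    (f := fun d x => ∑ i, ⟪L (b d i), x⟫ • (b d i : H)) (fun d => ?_) ?_
  · exact Finset.aestronglyMeasurable_fun_sum _ fun i _ =>
      (by fun_prop : Continuous fun x => ⟪L (b d i), x⟫).aestronglyMeasurable.smul_const _
  · filter_upwards [hadj] with x hx
    refine (Submodule.starProjection_tendsto_self U hU (Lstar x) hU_dense).congr fun d => ?_
    simp [(b d).starProjection_eq_sum_rankOne, hx d _ (b d _).2]

theorem consistency_L2_via_adjoint_general (hU : Monotone U)
    (hU_dense : ⊤ ≤ (⨆ d, U d).topologicalClosure) (hUL : ∀ d, U d ≤ Ldom)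
    {r p s : ℝ} (hrps : r.HolderTriple p s)
    {F : H → H} (hF : Continuous F) (hF_dom : ∀ x, F x ∈ Ldom)
    {g : ℝ → ℝ} (hg : MonotoneOn g (Set.Ici 0)) (hF_growth : ∀ x, ‖F x‖ ^ r ≤ g ‖x‖)
    (hg_int : Integrable (fun x => g ‖x‖) μ)
    (hadj : ∀ᵐ x ∂μ, ∀ y ∈ Ldom, ⟪L y, x⟫ = ⟪y, Lstar x⟫)
    (hLstar : ∫⁻ x, ENNReal.ofReal (‖Lstar x‖ ^ p) ∂μ < ⊤) :
    Tendsto (fun d => ∫⁻ x, ENNReal.ofReal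
      (|⟪L (F x - (U d).starProjection (F ((U d).starProjection x))), x⟫| ^ s) ∂μ)
      atTop (𝓝 0) := by
  have := secondCountableTopology_of_dense_iSup hU_dense
  set w := fun d x => F x - (U d).starProjection (F ((U d).starProjection x))
  have hw_dom (d : ℕ) (x : H) : w d x ∈ Ldom :=
    Ldom.sub_mem (hF_dom x) (hUL d (Submodule.starProjection_apply_mem _ _))
  have hw_le (d : ℕ) (x : H) : ‖w d x‖ ≤ 2 * ‖g ‖x‖‖ ^ r⁻¹ := by
    refine norm_sub_starProjection_comp_le _ fun y hy => ?_
    rw [Real.le_rpow_inv_iff_of_pos (norm_nonneg _) (norm_nonneg _) hrps.left_pos]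
    calc ‖F y‖ ^ r ≤ g ‖y‖ := hF_growth y
      _ ≤ g ‖x‖ := hg (norm_nonneg y) (norm_nonneg x) hy
      _ ≤ ‖g ‖x‖‖ := Real.le_norm_self _
  have hLstar_memLp : MemLp Lstar (ENNReal.ofReal p) μ :=
    memLp_ofReal_of_lintegral_rpow_lt_top hrps.right_pos
      (aestronglyMeasurable_of_ae_inner_eq_inner hU hU_dense
        (hadj.mono fun x hx d y hy => hx y (hUL d hy))) hLstar
  refine (tendsto_lintegral_abs_inner_rpow_zero hrps
    (fun d => (by fun_prop : Continuous (w d)).aestronglyMeasurable)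
    ((memLp_ofReal_norm_rpow_inv hrps.left_pos hg_int).const_mul 2) (fun d => .of_forall (hw_le d))
    (.of_forall fun x => tendsto_sub_starProjection_comp hU hU_dense hF.continuousAt)
    hLstar_memLp).congr fun d => lintegral_congr_ae ?_
  filter_upwards [hadj] with x hx
  rw [hx _ (hw_dom d x)]

end Galerkin

/-- verification of the L² consistency condition via the adjoint.  `LstarDom` and
`Lstar` represent the domain `D(L*)` and the action of the Hilbert-space adjoint of the
(possibly unbounded) closed, densely defined operator `L`, characterized by boundedness of the
functional `y ↦ ⟪L y, x⟫` on the domain of `L` and by the adjoint relation. -/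
theorem consistency_L2_via_adjoint
    {H : Type*} [NormedAddCommGroup H] [InnerProductSpace ℝ H] [CompleteSpace H]
    [MeasurableSpace H] [BorelSpace H]
    (e : ℕ → H) (he : Orthonormal ℝ e)
    (htot : Dense ((Submodule.span ℝ (Set.range e) : Submodule ℝ H) : Set H))
    (P : ℕ → H → H)
    (hP : ∀ (d : ℕ) (x : H), P d x = ∑ i ∈ Finset.range d, ⟪e i, x⟫ • e i)
    (L : H →ₗ[ℝ] H) (Ldom : Submodule ℝ H)
    (hLdense : Dense (Ldom : Set H))
    (hLclosed : IsClosed {p : H × H | p.1 ∈ Ldom ∧ p.2 = L p.1})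
    (heL : ∀ i : ℕ, e i ∈ Ldom)
    (p q : ℝ) (hp : 2 < p) (hq : 1 ≤ q)
    (v : H → ℝ) (hv : ContDiff ℝ 2 v)
    (hDvdom : ∀ x : H, gradient v x ∈ Ldom)
    (C : ℝ) (hC : 0 < C)
    (hgrowth : ∀ x : H, ‖gradient v x‖ ^ (2 * p / (p - 2)) ≤ C * (1 + ‖x‖ ^ q))
    (LstarDom : Set H) (Lstar : H → H)
    (hdomchar : ∀ x : H, x ∈ LstarDom ↔ ∃ c : ℝ, ∀ y ∈ Ldom, |⟪L y, x⟫| ≤ c * ‖y‖)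
    (hadj : ∀ y ∈ Ldom, ∀ x ∈ LstarDom, ⟪L y, x⟫ = ⟪y, Lstar x⟫)
    (μ : Measure H) [IsProbabilityMeasure μ]
    (hfull : μ LstarDomᶜ = 0)
    (hLstarp : ∫⁻ x in LstarDom, ENNReal.ofReal (‖Lstar x‖ ^ p) ∂μ < ⊤)
    (hμq : ∫⁻ x, ENNReal.ofReal (‖x‖ ^ q) ∂μ < ⊤) :
    Tendsto (fun d : ℕ =>
        ∫⁻ x, ENNReal.ofReal
          (|⟪L (gradient v x - P d (gradient v (P d x))), x⟫| ^ (2 : ℝ)) ∂μ)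
      atTop (𝓝 0) := by
  let U (d : ℕ) : Submodule ℝ H := Submodule.span ℝ (e '' Finset.range d)
  have (d : ℕ) : FiniteDimensional ℝ (U d) := .span_of_finite ℝ (Set.toFinite _)
  have hU : Monotone U := fun m n hmn =>
    Submodule.span_mono (Set.image_mono (Finset.range_mono hmn))
  have hUL (d : ℕ) : U d ≤ Ldom := Submodule.span_le.2 (by rintro _ ⟨i, -, rfl⟩; exact heL i)
  have hP_eq : P = fun d => ⇑(U d).starProjection :=
    funext₂ fun d x => (hP d x).trans (starProjection_span_image_eq_sum he _ x).symm
  subst hP_eq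
  have hq_int : Integrable (fun x : H => ‖x‖ ^ q) μ :=
    integrable_of_lintegral_ofReal_lt_top (by fun_prop (disch := linarith))
      (fun _ => by positivity) hμq
  exact consistency_L2_via_adjoint_general hU
    (top_le_topologicalClosure_iSup_span_image_range htot) hUL (holderTriple_two_mul_div_sub_two hp)
    (continuous_gradient_of_contDiff hv two_ne_zero) hDvdom (g := fun t => C * (1 + t ^ q))
    (fun s (hs : 0 ≤ s) t _ hst => by dsimp only; gcongr) hgrowth
    (((integrable_const 1).add hq_int).const_mul C)
    (mem_of_superset hfull fun x hx y hy => hadj y hy x hx)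
    (by rwa [Measure.restrict_eq_self_of_ae_mem hfull] at hLstarp)
end
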